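/- The geometrically defined operators on the localized equivariant cohomology of the SL(2) quasi-map spaces satisfy the sl(2) relations: let V be the k-vector space with basis (u_d)_{d ∈ ℕ}, with symmetric bilinear form ⟨u_d, u_{d'}⟩ = 0 for d ≠ d' and ⟨u_d, u_d⟩ = (-1)^d · A_d. Define F(u_d) = (1/ℏ)·u_{d-1} (with F(u_0) = 0), H(u_d) = (a/ℏ + 2d + 1)·u_d, and E(u_d) = -(d+1)·(a + (d+1)ℏ)·u_{d+1}. Then (i) E is adjoint to F, i.e. ⟨E(v), w⟩ = ⟨v, F(w)⟩ for all v, w ∈ V; and (ii) the commutator relations E∘F - F∘E = H, H∘E - E∘H = 2·E, and H∘F - F∘H = -2·F hold, so (E, H, F) defines an sl(2)-action on V. -/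

import Mathlib

/-- The geometrically defined operators on the localized
equivariant cohomology of the SL(2) quasi-map spaces satisfy the sl(2)
relations: on `V = ℕ →₀ k` with basis `u_d = single d 1`, signed Poincaré
pairing `⟨u_d, u_d⟩ = (-1)^d · A_d`, and operators
`F(u_d) = (1/ℏ)·u_{d-1}` (with `F(u_0) = 0`), `H(u_d) = (a/ℏ + 2d + 1)·u_d`,
`E(u_d) = -(d+1)·(a + (d+1)ℏ)·u_{d+1}`, the operator `E` is adjoint to `F` and
`[E,F] = H`, `[H,E] = 2E`, `[H,F] = -2F`. -/
theorem sl2_action_on_quasimap_cohomology {k : Type*} [Field k] [CharZero k]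
    (hbar a : k) (hhbar : hbar ≠ 0)
    (ha : ∀ i : ℕ, 1 ≤ i → a + (i : k) * hbar ≠ 0)
    (A : ℕ → k)
    (hA : ∀ d : ℕ, A d = 1 / ((Nat.factorial d : k) * hbar ^ d *
      ∏ i ∈ Finset.range d, (a + ((i : k) + 1) * hbar)))
    (P : (ℕ →₀ k) →ₗ[k] (ℕ →₀ k) →ₗ[k] k)
    (hP : ∀ d d' : ℕ, P (Finsupp.single d 1) (Finsupp.single d' 1) =
      if d = d' then (-1 : k) ^ d * A d else 0)
    (E H F : (ℕ →₀ k) →ₗ[k] (ℕ →₀ k))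
    (hF : ∀ d : ℕ, F (Finsupp.single d 1) =
      if d = 0 then 0 else hbar⁻¹ • Finsupp.single (d - 1) 1)
    (hH : ∀ d : ℕ, H (Finsupp.single d 1) =
      (a / hbar + 2 * (d : k) + 1) • Finsupp.single d 1)
    (hE : ∀ d : ℕ, E (Finsupp.single d 1) =
      (-(((d : k) + 1) * (a + ((d : k) + 1) * hbar))) • Finsupp.single (d + 1) 1) :
    (∀ v w : ℕ →₀ k, P (E v) w = P v (F w)) ∧
    E ∘ₗ F - F ∘ₗ E = H ∧
    H ∘ₗ E - E ∘ₗ H = (2 : k) • E ∧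
    H ∘ₗ F - F ∘ₗ H = (-2 : k) • F := by
  have hF0 : F (Finsupp.single 0 1) = 0 := by simpa using hF 0
  have hFs : ∀ d : ℕ, F (Finsupp.single (d + 1) 1) = hbar⁻¹ • Finsupp.single d 1 := by
    intro d
    simpa using hF (d + 1)
  have hAs : ∀ d : ℕ, ((d : k) + 1) * (a + ((d : k) + 1) * hbar) * A (d + 1) = hbar⁻¹ * A d := by
    intro d
    have h1 : (d : k) + 1 ≠ 0 := by exact_mod_cast Nat.succ_ne_zero d
    have h2 : a + ((d : k) + 1) * hbar ≠ 0 := by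
      have := ha (d + 1) (by omega)
      push_cast at this
      exact this
    have h3 : (∏ i ∈ Finset.range d, (a + ((i : k) + 1) * hbar)) ≠ 0 := by
      refine Finset.prod_ne_zero_iff.mpr fun i _ => ?_
      have := ha (i + 1) (by omega)
      push_cast at this
      exact this
    have h4 : (Nat.factorial d : k) ≠ 0 := by exact_mod_cast Nat.factorial_ne_zero d
    rw [hA, hA, Finset.prod_range_succ, Nat.factorial_succ]
    push_cast
    generalize (∏ i ∈ Finset.range d, (a + ((i : k) + 1) * hbar)) = p at *
    generalize a + ((d : k) + 1) * hbar = q at *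
    field_simp
    ring
  refine ⟨?_, ?_, ?_, ?_⟩
  · have key : P ∘ₗ E = (P.compl₂ F) := by
      apply Finsupp.lhom_ext'
      intro d
      apply LinearMap.ext_ring
      apply Finsupp.lhom_ext'
      intro e
      apply LinearMap.ext_ring
      simp only [LinearMap.comp_apply, Finsupp.lsingle_apply, LinearMap.compl₂_apply, hE,
        map_smul, LinearMap.smul_apply, hP, smul_eq_mul]
      cases e with
      | zero => simp [hF0]
      | succ e =>
        rw [hFs, map_smul, hP]
        by_cases h : d = e
        · subst h
          simp only [if_true, smul_eq_mul]
          linear_combination (-1 : k) ^ d * hAs d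
        · simp [h]
    intro v w
    exact LinearMap.congr_fun (LinearMap.congr_fun key v) w
  all_goals
    apply Finsupp.lhom_ext'
    intro d
    apply LinearMap.ext_ring
    simp only [LinearMap.comp_apply, Finsupp.lsingle_apply, LinearMap.sub_apply,
      LinearMap.smul_apply]
    cases d with
    | zero =>
      simp only [hF0, hFs, hE, hH, map_smul, map_zero, smul_smul, smul_zero, sub_zero, zero_sub,
        ← sub_smul, ← neg_smul]
      try (congr 1; push_cast; field_simp; ring)
    | succ d =>
      simp only [hFs, hE, hH, map_smul, smul_smul, ← sub_smul]
      congr 1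
      push_cast
      field_simp
      ring
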